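/- arXiv:2203.12133 — 2 statements merged into one kernel-verified Lean document; each statement's English description precedes it below -/
import Mathlib

section
/- Let F : ({0,...,T} × S × A → ℝ) → ℝ be twice continuously differentiable on an open convex set U containing 𝒳(P, z₀), with positive definite Hessian at every point of U, and let c_x(t,s,a) := ∂F/∂x(t,s,a)(x) denote its gradient. Then x̂ ∈ 𝒳(P, z₀) minimizes F over 𝒳(P, z₀) if and only if x̂ satisfies the Bellman condition for the costs c_{x̂}. -/
open Finset

/-- The feasible set 𝒳(P, z₀) of state-action distributions. -/
def Feas {S A : Type*} [Fintype S] [Fintype A] (T : ℕ)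
    (P : Fin (T+1) → S → S → A → ℝ) (z0 : S → ℝ) :
    Set (Fin (T+1) → S → A → ℝ) :=
  {x | (∀ t s a, 0 ≤ x t s a) ∧
    (∀ s, ∑ a, x 0 s a = z0 s) ∧
    ∀ (t : ℕ) (ht : t < T), ∀ s,
      ∑ s', ∑ a, P ⟨t+1, by omega⟩ s s' a * x ⟨t, by omega⟩ s' a
        = ∑ a, x ⟨t+1, by omega⟩ s a}

/-- `P` is a transition kernel: nonnegative, and column-stochastic for t ∈ {1,…,T}. -/
def IsKernel {S A : Type*} [Fintype S] (T : ℕ)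
    (P : Fin (T+1) → S → S → A → ℝ) : Prop :=
  (∀ t s' s a, 0 ≤ P t s' s a) ∧
    ∀ t : Fin (T+1), t ≠ 0 → ∀ s a, ∑ s', P t s' s a = 1

/-- Backwards recursion for Q-values: `Qaux T P c k` is the Q-value at time T - k. -/
noncomputable def Qaux {S A : Type*} [Fintype S] [Fintype A] [Nonempty A] (T : ℕ)
    (P : Fin (T+1) → S → S → A → ℝ) (c : Fin (T+1) → S → A → ℝ) : ℕ → S → A → ℝ
  | 0, s, a => c (Fin.last T) s a
  | k+1, s, a =>
    c ⟨T - (k+1), by omega⟩ s a +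
      ∑ s', P ⟨T - k, by omega⟩ s' s a *
        Finset.univ.inf' Finset.univ_nonempty (Qaux T P c k s')

/-- Q-values: `Q(T,s,a) = c(T,s,a)`,
`Q(t-1,s,a) = c(t-1,s,a) + ∑_{s'} P(t,s',s,a) · min_{a'} Q(t,s',a')`. -/
noncomputable def Qval {S A : Type*} [Fintype S] [Fintype A] [Nonempty A] (T : ℕ)
    (P : Fin (T+1) → S → S → A → ℝ) (c : Fin (T+1) → S → A → ℝ)
    (t : Fin (T+1)) : S → A → ℝ :=
  Qaux T P c (T - t.1)

/-- x satisfies the Bellman condition for costs c: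
every state-action pair played with positive probability achieves the minimal Q-value. -/
def BellmanCond {S A : Type*} [Fintype S] [Fintype A] [Nonempty A] (T : ℕ)
    (P : Fin (T+1) → S → S → A → ℝ) (c : Fin (T+1) → S → A → ℝ)
    (x : Fin (T+1) → S → A → ℝ) : Prop :=
  ∀ t s a, 0 < x t s a →
    Qval T P c t s a = Finset.univ.inf' Finset.univ_nonempty (Qval T P c t s)

/-- Standard basis vector of the space of state-action functions. -/
def eb {S A : Type*} [DecidableEq S] [DecidableEq A] (T : ℕ)
    (t : Fin (T+1)) (s : S) (a : A) : Fin (T+1) → S → A → ℝ :=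
  fun t' s' a' => if t' = t ∧ s' = s ∧ a' = a then 1 else 0

/-- Standard basis vector of the joint (N-player) space. -/
def ebN {S A : Type*} [DecidableEq S] [DecidableEq A] (N T : ℕ)
    (i : Fin N) (t : Fin (T+1)) (s : S) (a : A) :
    Fin N → Fin (T+1) → S → A → ℝ :=
  fun j => if j = i then eb T t s a else 0

/-!
Convexity reduces minimality of `x̂` to the variational inequality `L x̂ ≤ L x` for feasible `x`,
where `L` is the derivative of `F` at `x̂`; that is, `x̂` solves the linear program whose cost is
the gradient at `x̂`. For any cost `c`, summing the flow constraints against the value function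
`V(t,s) = min_a Q(t,s,a)` telescopes to

  `⟨x, c⟩ = ∑ s, z₀(s) V(0,s) + ⟨x, Q - V⟩`  for every feasible `x`.

The first term does not depend on `x` and the second is nonnegative, vanishing exactly under the
Bellman condition. A greedy policy makes it vanish, so the minimizers of the linear program are
exactly the feasible points satisfying the Bellman condition.
-/

section Convexity

open AffineMap

theorem convexOn_of_convexOn_comp_lineMap {E : Type*} [AddCommGroup E] [Module ℝ E] {f : E → ℝ}
    {s : Set E} (hs : Convex ℝ s)
    (h : ∀ x ∈ s, ∀ y ∈ s, ConvexOn ℝ (Set.Icc 0 1) fun τ : ℝ ↦ f (lineMap x y τ)) :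
    ConvexOn ℝ s f := by
  refine ⟨hs, fun x hx y hy a b ha hb hab ↦ ?_⟩
  have hseg := (h x hx y hy).2 (Set.left_mem_Icc.2 zero_le_one) (Set.right_mem_Icc.2 zero_le_one)
    ha hb hab
  have hb' : lineMap x y b = a • x + b • y := by
    rw [lineMap_apply_module, ← hab, add_sub_cancel_right]
  simpa [hb'] using hseg

variable {E : Type*} [NormedAddCommGroup E] [NormedSpace ℝ E] {f : E → ℝ} {s : Set E}

theorem convexOn_of_hasFDerivWithinAt2_nonneg {f' : E → E →L[ℝ] ℝ} {f'' : E → E →L[ℝ] E →L[ℝ] ℝ}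
    (hs : Convex ℝ s) (hf' : ∀ x ∈ s, HasFDerivWithinAt f (f' x) s x)
    (hf'' : ∀ x ∈ s, HasFDerivWithinAt f' (f'' x) s x) (hnonneg : ∀ x ∈ s, ∀ v, 0 ≤ f'' x v v) :
    ConvexOn ℝ s f := by
  refine convexOn_of_convexOn_comp_lineMap hs fun x hx y hy ↦ ?_
  have hmaps : Set.MapsTo (lineMap x y) (Set.Icc (0 : ℝ) 1) s :=
    fun τ hτ ↦ hs.lineMap_mem hx hy hτ
  have hderiv : ∀ τ ∈ Set.Icc (0 : ℝ) 1, HasDerivWithinAt (fun τ ↦ f (lineMap x y τ))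
      (f' (lineMap x y τ) (y - x)) (Set.Icc 0 1) τ := fun τ hτ ↦
    (hf' _ (hmaps hτ)).comp_hasDerivWithinAt τ hasDerivWithinAt_lineMap hmaps
  have hderiv2 : ∀ τ ∈ Set.Icc (0 : ℝ) 1, HasDerivWithinAt (fun τ ↦ f' (lineMap x y τ) (y - x))
      (f'' (lineMap x y τ) (y - x) (y - x)) (Set.Icc 0 1) τ := fun τ hτ ↦ by
    simpa using ((hf'' _ (hmaps hτ)).comp_hasDerivWithinAt τ hasDerivWithinAt_lineMap
      hmaps).clm_apply (hasDerivWithinAt_const τ _ (y - x))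
  exact convexOn_of_hasDerivWithinAt2_nonneg (convex_Icc 0 1)
    (fun τ hτ ↦ (hderiv τ hτ).continuousWithinAt)
    (fun τ hτ ↦ (hderiv τ (interior_subset hτ)).mono interior_subset)
    (fun τ hτ ↦ (hderiv2 τ (interior_subset hτ)).mono interior_subset)
    (fun τ hτ ↦ hnonneg _ (hmaps (interior_subset hτ)) _)

theorem convexOn_of_fderiv_fderiv_nonneg (hs : Convex ℝ s) (hopen : IsOpen s)
    (hf : ContDiffOn ℝ 2 f s) (hnonneg : ∀ x ∈ s, ∀ v, 0 ≤ fderiv ℝ (fderiv ℝ f) x v v) :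
    ConvexOn ℝ s f := by
  have hf_at : ∀ x ∈ s, ContDiffAt ℝ 2 f x := fun x hx ↦ hf.contDiffAt (hopen.mem_nhds hx)
  refine convexOn_of_hasFDerivWithinAt2_nonneg (f' := fderiv ℝ f) hs
    (fun x hx ↦ ?_) (fun x hx ↦ ?_) hnonneg
  · exact ((hf_at x hx).differentiableAt two_ne_zero).hasFDerivAt.hasFDerivWithinAt
  · have hfderiv : ContDiffAt ℝ 1 (fderiv ℝ f) x :=
      (hf_at x hx).fderiv_right (by rw [one_add_one_eq_two])
    exact (hfderiv.differentiableAt one_ne_zero).hasFDerivAt.hasFDerivWithinAt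

theorem convexOn_of_fderiv_fderiv_pos (hs : Convex ℝ s) (hopen : IsOpen s)
    (hf : ContDiffOn ℝ 2 f s) (hpos : ∀ x ∈ s, ∀ v ≠ 0, 0 < fderiv ℝ (fderiv ℝ f) x v v) :
    ConvexOn ℝ s f := by
  refine convexOn_of_fderiv_fderiv_nonneg hs hopen hf fun x hx v ↦ ?_
  obtain rfl | hv := eq_or_ne v 0
  · simp
  · exact (hpos x hx v hv).le

variable {f' : E →L[ℝ] ℝ} {x y : E}

theorem hasFDerivWithinAt_apply_sub_le_of_convexOn (hf : ConvexOn ℝ s f)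
    (hf' : HasFDerivWithinAt f f' s x) (hx : x ∈ s) (hy : y ∈ s) : f' (y - x) ≤ f y - f x := by
  have hderiv : HasDerivWithinAt (f ∘ lineMap x y) (f' (y - x)) (lineMap x y ⁻¹' s) (0 : ℝ) :=
    hf'.comp_hasDerivWithinAt_of_eq 0 hasDerivWithinAt_lineMap (Set.mapsTo_preimage _ _)
      (lineMap_apply_zero x y).symm
  simpa [slope_def_field] using (hf.comp_affineMap (lineMap x y)).le_slope_of_hasDerivWithinAt
    (by simpa using hx) (by simpa using hy) zero_lt_one hderiv

theorem isMinOn_iff_of_hasFDerivWithinAt_of_convexOn (hf : ConvexOn ℝ s f)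
    (hf' : HasFDerivWithinAt f f' s x) (hx : x ∈ s) : IsMinOn f s x ↔ IsMinOn f' s x := by
  simp only [isMinOn_iff]
  refine ⟨fun hmin y hy ↦ ?_, fun hmin y hy ↦ ?_⟩
  · have hnonneg : 0 ≤ f' (y - x) := (isMinOn_iff.2 hmin).localize.hasFDerivWithinAt_nonneg hf'
      (sub_mem_posTangentConeAt_of_segment_subset (hf.1.segment_subset hx hy))
    simpa using hnonneg
  · have hle := hasFDerivWithinAt_apply_sub_le_of_convexOn hf hf' hx hy
    rw [map_sub] at hle
    linarith [hmin y hy]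

end Convexity

section TotalCost

variable {ι S A : Type*} [Fintype ι] [Fintype S] [Fintype A]

/-- The pairing `⟨x, c⟩ = ∑ t s a, x(t,s,a) c(t,s,a)`, i.e. the total cost incurred by the
state-action distribution `x`; this is the objective of the linear program over `Feas`. -/
def totalCost (x c : ι → S → A → ℝ) : ℝ :=
  ∑ t, ∑ s, ∑ a, x t s a * c t s a

theorem totalCost_sub_right (x c d : ι → S → A → ℝ) :
    totalCost x (c - d) = totalCost x c - totalCost x d := by
  simp only [totalCost, Pi.sub_apply, mul_sub, sum_sub_distrib]

variable {x c : ι → S → A → ℝ}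

theorem totalCost_nonneg (hx : ∀ t s a, 0 ≤ x t s a) (hc : ∀ t s a, 0 ≤ c t s a) :
    0 ≤ totalCost x c :=
  sum_nonneg fun t _ ↦ sum_nonneg fun s _ ↦ sum_nonneg fun a _ ↦ mul_nonneg (hx t s a) (hc t s a)

theorem totalCost_eq_zero_iff (hx : ∀ t s a, 0 ≤ x t s a) (hc : ∀ t s a, 0 ≤ c t s a) :
    totalCost x c = 0 ↔ ∀ t s a, 0 < x t s a → c t s a = 0 := by
  have hterm : ∀ t s a, 0 ≤ x t s a * c t s a := fun t s a ↦ mul_nonneg (hx t s a) (hc t s a)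
  have hrow : ∀ t s, 0 ≤ ∑ a, x t s a * c t s a := fun t s ↦ sum_nonneg fun a _ ↦ hterm t s a
  have hslice : ∀ t, 0 ≤ ∑ s, ∑ a, x t s a * c t s a := fun t ↦ sum_nonneg fun s _ ↦ hrow t s
  simp only [totalCost, sum_eq_zero_iff_of_nonneg, hterm, hrow, hslice, mem_univ, implies_true,
    true_imp_iff, mul_eq_zero, (hx _ _ _).lt_iff_ne', or_iff_not_imp_left, ne_eq]

theorem linearMap_apply_eq_totalCost [DecidableEq S] [DecidableEq A] {T : ℕ}
    (L : (Fin (T + 1) → S → A → ℝ) →ₗ[ℝ] ℝ) (v : Fin (T + 1) → S → A → ℝ) :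
    L v = totalCost v fun t s a ↦ L (eb T t s a) := by
  have hv : v = ∑ t, ∑ s, ∑ a, v t s a • eb T t s a := by
    funext t s a
    simp [eb, ite_and, Finset.sum_apply]
  conv_lhs => rw [hv]
  simp only [map_sum, map_smul, smul_eq_mul, totalCost]

end TotalCost

section Policy

variable {S A : Type*} [Fintype S] {T : ℕ} {P : Fin (T + 1) → S → S → A → ℝ} {z0 : S → ℝ}

/-- The state distribution at each time when starting from `z0` and playing action `g t s` in
state `s` at time `t`. -/
def policyMass (P : Fin (T + 1) → S → S → A → ℝ) (z0 : S → ℝ) (g : Fin (T + 1) → S → A)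
    (t : Fin (T + 1)) : S → ℝ :=
  Fin.induction (motive := fun _ ↦ S → ℝ) z0
    (fun i m s ↦ ∑ s', P i.succ s s' (g i.castSucc s') * m s') t

theorem policyMass_succ (g : Fin (T + 1) → S → A) (i : Fin T) (s : S) :
    policyMass P z0 g i.succ s =
      ∑ s', P i.succ s s' (g i.castSucc s') * policyMass P z0 g i.castSucc s' := by
  simp only [policyMass, Fin.induction_succ]

theorem policyMass_nonneg (hP : ∀ t s' s a, 0 ≤ P t s' s a) (hz0 : ∀ s, 0 ≤ z0 s)
    (g : Fin (T + 1) → S → A) (t : Fin (T + 1)) (s : S) : 0 ≤ policyMass P z0 g t s := by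
  induction t using Fin.induction generalizing s with
  | zero => exact hz0 s
  | succ i ih =>
    rw [policyMass_succ]
    exact sum_nonneg fun s' _ ↦ mul_nonneg (hP _ _ _ _) (ih s')

/-- The state-action distribution generated from `z0` by the deterministic policy `g`. -/
def policyFlow [DecidableEq A] (P : Fin (T + 1) → S → S → A → ℝ) (z0 : S → ℝ)
    (g : Fin (T + 1) → S → A) (t : Fin (T + 1)) (s : S) (a : A) : ℝ :=
  if a = g t s then policyMass P z0 g t s else 0

end Policy

section FeasibleSet

variable {S A : Type*} [Fintype S] [Fintype A] {T : ℕ} {P : Fin (T + 1) → S → S → A → ℝ}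
  {z0 : S → ℝ}

theorem mem_feas_iff {x : Fin (T + 1) → S → A → ℝ} :
    x ∈ Feas T P z0 ↔ (∀ t s a, 0 ≤ x t s a) ∧ (∀ s, ∑ a, x 0 s a = z0 s) ∧
      ∀ (i : Fin T) (s : S),
        ∑ s', ∑ a, P i.succ s s' a * x i.castSucc s' a = ∑ a, x i.succ s a :=
  and_congr_right' (and_congr_right' (Fin.forall_iff (p := fun i : Fin T ↦ ∀ s,
    ∑ s', ∑ a, P i.succ s s' a * x i.castSucc s' a = ∑ a, x i.succ s a)).symm)

variable (P z0) in
theorem convex_feas : Convex ℝ (Feas T P z0) := by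
  rintro x hx y hy α β hα hβ hab
  obtain ⟨hx_nonneg, hx_init, hx_flow⟩ := mem_feas_iff.1 hx
  obtain ⟨hy_nonneg, hy_init, hy_flow⟩ := mem_feas_iff.1 hy
  refine mem_feas_iff.2 ⟨fun t s a ↦ ?_, fun s ↦ ?_, fun i s ↦ ?_⟩
  · exact add_nonneg (mul_nonneg hα (hx_nonneg t s a)) (mul_nonneg hβ (hy_nonneg t s a))
  · simp only [Pi.add_apply, Pi.smul_apply, smul_eq_mul, sum_add_distrib, ← mul_sum, hx_init,
      hy_init, ← add_mul, hab, one_mul]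
  · simp only [Pi.add_apply, Pi.smul_apply, smul_eq_mul, mul_add, mul_left_comm (P _ _ _ _),
      sum_add_distrib, ← mul_sum, hx_flow, hy_flow]

theorem policyFlow_mem_feas [DecidableEq A] (hP : ∀ t s' s a, 0 ≤ P t s' s a)
    (hz0 : ∀ s, 0 ≤ z0 s) (g : Fin (T + 1) → S → A) : policyFlow P z0 g ∈ Feas T P z0 := by
  refine mem_feas_iff.2 ⟨fun t s a ↦ ?_, fun s ↦ ?_, fun i s ↦ ?_⟩
  · exact ite_nonneg (policyMass_nonneg hP hz0 g t s) le_rfl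
  · simp [policyFlow, policyMass]
  · simp [policyFlow, policyMass_succ]

end FeasibleSet

section Bellman

variable {S A : Type*} [Fintype S] [Fintype A] [Nonempty A] {T : ℕ}

/-- The value function `V(t,s) = min_a Q(t,s,a)` of the Markov decision process. -/
noncomputable def valueFn (P : Fin (T + 1) → S → S → A → ℝ) (c : Fin (T + 1) → S → A → ℝ)
    (t : Fin (T + 1)) (s : S) : ℝ :=
  univ.inf' univ_nonempty (Qval T P c t s)

/-- The suboptimality gap `Q(t,s,a) - V(t,s)` of a state-action pair. -/
noncomputable def bellmanGap (P : Fin (T + 1) → S → S → A → ℝ) (c : Fin (T + 1) → S → A → ℝ) :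
    Fin (T + 1) → S → A → ℝ :=
  Qval T P c - fun t s _ ↦ valueFn P c t s

variable (P : Fin (T + 1) → S → S → A → ℝ) (c : Fin (T + 1) → S → A → ℝ)

theorem Qval_last : Qval T P c (Fin.last T) = c (Fin.last T) := by
  funext s a
  simp [Qval, Qaux]

theorem Qval_castSucc (i : Fin T) (s : S) (a : A) :
    Qval T P c i.castSucc s a =
      c i.castSucc s a + ∑ s', P i.succ s' s a * valueFn P c i.succ s' := by
  obtain ⟨t, ht⟩ := i
  obtain ⟨k, rfl⟩ := Nat.exists_eq_add_of_lt ht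
  have hk : t + k + 1 - t = k + 1 := by omega
  have hk_succ : t + k + 1 - (t + 1) = k := by omega
  have ht_succ : t + k + 1 - k = t + 1 := by omega
  have ht' : t + k + 1 - (k + 1) = t := by omega
  simp only [Qval, valueFn, Fin.castSucc_mk, Fin.succ_mk, hk, hk_succ, Qaux, ht_succ, ht']

theorem bellmanGap_nonneg (t : Fin (T + 1)) (s : S) (a : A) : 0 ≤ bellmanGap P c t s a :=
  sub_nonneg.2 (inf'_le _ (mem_univ a))

theorem exists_forall_Qval_eq_valueFn :
    ∃ g : Fin (T + 1) → S → A, ∀ t s, Qval T P c t s (g t s) = valueFn P c t s := by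
  have hmin : ∀ t s, ∃ a, Qval T P c t s a = valueFn P c t s := fun t s ↦ by
    obtain ⟨a, -, ha⟩ := exists_mem_eq_inf' univ_nonempty (Qval T P c t s)
    exact ⟨a, ha.symm⟩
  choose g hg using hmin
  exact ⟨g, hg⟩

variable {P c} {z0 : S → ℝ} {x : Fin (T + 1) → S → A → ℝ}

theorem sum_mul_valueFn_succ (hx : x ∈ Feas T P z0) (i : Fin T) :
    ∑ s, (∑ a, x i.succ s a) * valueFn P c i.succ s =
      ∑ s, ∑ a, x i.castSucc s a * ∑ s', P i.succ s' s a * valueFn P c i.succ s' := by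
  simp only [← (mem_feas_iff.1 hx).2.2 i, sum_mul, mul_sum]
  rw [sum_comm]
  refine sum_congr rfl fun s _ ↦ ?_
  rw [sum_comm]
  exact sum_congr rfl fun a _ ↦ sum_congr rfl fun s' _ ↦ by ring

theorem totalCost_Qval (hx : x ∈ Feas T P z0) :
    totalCost x (Qval T P c) =
      totalCost x c + ∑ i : Fin T, ∑ s, (∑ a, x i.succ s a) * valueFn P c i.succ s := by
  simp only [totalCost, Fin.sum_univ_castSucc, Qval_last, Qval_castSucc, mul_add, sum_add_distrib,
    sum_mul_valueFn_succ hx]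
  ring

theorem totalCost_valueFn (hx : x ∈ Feas T P z0) :
    totalCost x (fun t s _ ↦ valueFn P c t s) =
      ∑ s, z0 s * valueFn P c 0 s +
        ∑ i : Fin T, ∑ s, (∑ a, x i.succ s a) * valueFn P c i.succ s := by
  simp only [totalCost, ← sum_mul, Fin.sum_univ_succ, (mem_feas_iff.1 hx).2.1]

theorem totalCost_eq_add_totalCost_bellmanGap (hx : x ∈ Feas T P z0) :
    totalCost x c = ∑ s, z0 s * valueFn P c 0 s + totalCost x (bellmanGap P c) := by
  rw [bellmanGap, totalCost_sub_right, totalCost_Qval hx, totalCost_valueFn hx]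
  ring

theorem bellmanCond_iff_totalCost_bellmanGap_eq_zero (hx : ∀ t s a, 0 ≤ x t s a) :
    BellmanCond T P c x ↔ totalCost x (bellmanGap P c) = 0 := by
  rw [totalCost_eq_zero_iff hx (bellmanGap_nonneg P c)]
  simp only [bellmanGap, Pi.sub_apply, sub_eq_zero, BellmanCond, valueFn]

variable (c) in
theorem exists_mem_feas_bellmanCond (hP : ∀ t s' s a, 0 ≤ P t s' s a) (hz0 : ∀ s, 0 ≤ z0 s) :
    ∃ y ∈ Feas T P z0, BellmanCond T P c y := by
  classical
  obtain ⟨g, hg⟩ := exists_forall_Qval_eq_valueFn P c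
  refine ⟨policyFlow P z0 g, policyFlow_mem_feas hP hz0 g, fun t s a hpos ↦ ?_⟩
  obtain rfl : a = g t s := by
    by_contra hne
    simp [policyFlow, hne] at hpos
  exact hg t s

theorem isMinOn_totalCost_iff_bellmanCond (hP : ∀ t s' s a, 0 ≤ P t s' s a)
    (hx : x ∈ Feas T P z0) :
    IsMinOn (fun y ↦ totalCost y c) (Feas T P z0) x ↔ BellmanCond T P c x := by
  rw [bellmanCond_iff_totalCost_bellmanGap_eq_zero hx.1, isMinOn_iff]
  constructor
  · intro hmin
    have hz0 : ∀ s, 0 ≤ z0 s := fun s ↦ hx.2.1 s ▸ sum_nonneg fun a _ ↦ hx.1 0 s a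
    obtain ⟨y, hy, hy_bellman⟩ := exists_mem_feas_bellmanCond c hP hz0
    have hy_gap := (bellmanCond_iff_totalCost_bellmanGap_eq_zero hy.1).1 hy_bellman
    have hle := hmin y hy
    rw [totalCost_eq_add_totalCost_bellmanGap hx, totalCost_eq_add_totalCost_bellmanGap hy,
      hy_gap] at hle
    exact le_antisymm (by linarith) (totalCost_nonneg hx.1 (bellmanGap_nonneg P c))
  · intro hx_gap y hy
    rw [totalCost_eq_add_totalCost_bellmanGap hx, totalCost_eq_add_totalCost_bellmanGap hy, hx_gap]
    gcongr
    exact totalCost_nonneg hy.1 (bellmanGap_nonneg P c)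

end Bellman

theorem stmt1_general {S A : Type*} [Fintype S] [Fintype A] [Nonempty A]
    [DecidableEq S] [DecidableEq A] {T : ℕ} {P : Fin (T + 1) → S → S → A → ℝ} {z0 : S → ℝ}
    {F : (Fin (T + 1) → S → A → ℝ) → ℝ} {F' : (Fin (T + 1) → S → A → ℝ) →L[ℝ] ℝ}
    {xhat : Fin (T + 1) → S → A → ℝ} (hP : ∀ t s' s a, 0 ≤ P t s' s a)
    (hF : ConvexOn ℝ (Feas T P z0) F) (hF' : HasFDerivWithinAt F F' (Feas T P z0) xhat)
    (hxhat : xhat ∈ Feas T P z0) :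
    (∀ x ∈ Feas T P z0, F xhat ≤ F x) ↔ BellmanCond T P (fun t s a ↦ F' (eb T t s a)) xhat := by
  have hF'_eq : ⇑F' = fun v ↦ totalCost v fun t s a ↦ F' (eb T t s a) :=
    funext (linearMap_apply_eq_totalCost F'.toLinearMap)
  rw [← isMinOn_iff, isMinOn_iff_of_hasFDerivWithinAt_of_convexOn hF hF' hxhat,
    ← isMinOn_totalCost_iff_bellmanCond hP hxhat, ← hF'_eq]

/-- For F twice continuously differentiable with positive definite Hessian on
an open convex set U ⊇ 𝒳(P,z₀): x̂ ∈ 𝒳(P,z₀) minimizes F over 𝒳(P,z₀) iff x̂ satisfies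
the Bellman condition for the gradient costs c_x̂(t,s,a) = ∂F/∂x(t,s,a)(x̂). -/
theorem stmt1 {S A : Type*} [Fintype S] [Fintype A] [Nonempty S] [Nonempty A]
    [DecidableEq S] [DecidableEq A] {T : ℕ}
    (P : Fin (T+1) → S → S → A → ℝ) (hP : IsKernel T P)
    (z0 : S → ℝ) (hz0 : ∀ s, 0 ≤ z0 s)
    (F : (Fin (T+1) → S → A → ℝ) → ℝ)
    (U : Set (Fin (T+1) → S → A → ℝ)) (hUopen : IsOpen U) (hUconv : Convex ℝ U)
    (hXU : Feas T P z0 ⊆ U)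
    (hC2 : ContDiffOn ℝ 2 F U)
    (hhess : ∀ x ∈ U, ∀ v : Fin (T+1) → S → A → ℝ, v ≠ 0 →
      0 < fderiv ℝ (fderiv ℝ F) x v v)
    (xhat : Fin (T+1) → S → A → ℝ) (hxhat : xhat ∈ Feas T P z0) :
    (∀ x ∈ Feas T P z0, F xhat ≤ F x) ↔
      BellmanCond T P (fun t s a => fderiv ℝ F xhat (eb T t s a)) xhat := by
  have hdiff : DifferentiableAt ℝ F xhat :=
    (hC2.contDiffAt (hUopen.mem_nhds (hXU hxhat))).differentiableAt two_ne_zero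
  exact stmt1_general hP.1
    ((convexOn_of_fderiv_fderiv_pos hUconv hUopen hC2 hhess).subset hXU (convex_feas P z0))
    hdiff.hasFDerivAt.hasFDerivWithinAt hxhat
end

section
/- Let the player costs have the congestion form ℓ^i(t,s,a)(x) = α_i · f_{t,s}(∑_{a'} y(t,s,a')) + α_i · g_{t,s,a}(y(t,s,a)) + h^i_{t,s,a}(x^i(t,s,a)), where y = ∑_{j=1}^N α_j x^j with α_j > 0, and each f_{t,s}, g_{t,s,a}, h^i_{t,s,a} : ℝ → ℝ is continuous. Define F(x) = ∑_{t,s} ∫_0^{∑_{a'} y(t,s,a')} f_{t,s}(u) du + ∑_{t,s,a} ∫_0^{y(t,s,a)} g_{t,s,a}(u) du + ∑_{i,t,s,a} ∫_0^{x^i(t,s,a)} h^i_{t,s,a}(u) du. Then F is differentiable on ℝ^{N(T+1)|S||A|} and ∂F/∂x^i(t,s,a)(x) = ℓ^i(t,s,a)(x) for every x and every index (i,t,s,a), i.e., F is a potential function for these costs. -/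
open Finset

/-!
By the fundamental theorem of calculus and the chain rule, a primitive of `φ` composed with `u` has
partial derivatives `∂u · φ(u)`. In `F`, every such `u` is linear in `x`, and its partial derivative
in the coordinate `(i, t, s, a)` is `α i` or `1` at the matching index and zero elsewhere. Hence
differentiating each of the three sums leaves a single term, the corresponding summand of the cost.
-/

/-- `F` is a potential for the costs `ℓ`: it is differentiable, and `ℓ k` is its derivative in the
direction `e k`. Allowing any family of directions `e` makes this meaningful in every normed space;
for a game, `e` is the standard basis of the space of joint strategies. -/
def IsPotential {K E : Type*} [NormedAddCommGroup E] [NormedSpace ℝ E]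
    (e : K → E) (F : E → ℝ) (ℓ : K → E → ℝ) : Prop :=
  ∀ x, DifferentiableAt ℝ F x ∧ ∀ k, fderiv ℝ F x (e k) = ℓ k x

namespace IsPotential

variable {K E : Type*} [NormedAddCommGroup E] [NormedSpace ℝ E] {e : K → E}
  {F G : E → ℝ} {ℓ m : K → E → ℝ}

theorem of_continuousLinearMap (e : K → E) (L : E →L[ℝ] ℝ) :
    IsPotential e L fun k _ => L (e k) :=
  fun _ => ⟨L.differentiableAt, fun k => by rw [L.fderiv]⟩

theorem congr_cost (hF : IsPotential e F ℓ) (h : ∀ k x, ℓ k x = m k x) : IsPotential e F m :=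
  fun x => ⟨(hF x).1, fun k => ((hF x).2 k).trans (h k x)⟩

theorem add (hF : IsPotential e F ℓ) (hG : IsPotential e G m) :
    IsPotential e (fun x => F x + G x) fun k x => ℓ k x + m k x := fun x =>
  ⟨(hF x).1.fun_add (hG x).1, fun k => by
    rw [fderiv_fun_add (hF x).1 (hG x).1, add_apply, (hF x).2, (hG x).2]⟩

theorem const_mul (hF : IsPotential e F ℓ) (c : ℝ) :
    IsPotential e (fun x => c * F x) fun k x => c * ℓ k x := fun x =>
  ⟨(hF x).1.const_mul c, fun k => by
    rw [fderiv_const_mul (hF x).1, smul_apply, (hF x).2, smul_eq_mul]⟩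

theorem sum {I : Type*} {s : Finset I} {F : I → E → ℝ} {ℓ : I → K → E → ℝ}
    (hF : ∀ i ∈ s, IsPotential e (F i) (ℓ i)) :
    IsPotential e (fun x => ∑ i ∈ s, F i x) fun k x => ∑ i ∈ s, ℓ i k x := fun x =>
  ⟨DifferentiableAt.fun_sum fun i hi => (hF i hi x).1, fun k => by
    rw [fderiv_fun_sum fun i hi => (hF i hi x).1, _root_.sum_apply]
    exact Finset.sum_congr rfl fun i hi => (hF i hi x).2 k⟩

theorem integral_comp {φ : ℝ → ℝ} (hφ : Continuous φ) (c : ℝ) (hF : IsPotential e F ℓ) :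
    IsPotential e (fun x => ∫ u in c..F x, φ u) fun k x => ℓ k x * φ (F x) := by
  intro x
  have fundamental_theorem : HasDerivAt (fun w => ∫ u in c..w, φ u) (φ (F x)) (F x) :=
    (hφ.integral_hasStrictDerivAt c (F x)).hasDerivAt
  have chain_rule : HasFDerivAt (fun z => ∫ u in c..F z, φ u) (φ (F x) • fderiv ℝ F x) x :=
    fundamental_theorem.comp_hasFDerivAt x (hF x).1.hasFDerivAt
  refine ⟨chain_rule.differentiableAt, fun k => ?_⟩
  rw [chain_rule.fderiv, smul_apply, (hF x).2, smul_eq_mul, mul_comm]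

end IsPotential

section Congestion

variable {ι τ S A : Type*}

/-- The standard basis vector of the joint strategy space at the index `k = (i, t, s, a)`. Unlike
in `ebN`, players and times range over arbitrary types and the index is a single tuple. -/
def pointMass [DecidableEq ι] [DecidableEq τ] [DecidableEq S] [DecidableEq A]
    (k : ι × τ × S × A) : ι → τ → S → A → ℝ :=
  fun j t s a => if (j, t, s, a) = k then 1 else 0

theorem pointMass_eq_ebN [DecidableEq S] [DecidableEq A] {N T : ℕ}
    (i : Fin N) (t : Fin (T + 1)) (s : S) (a : A) : pointMass (i, t, s, a) = ebN N T i t s a := by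
  ext j t' s' a'
  by_cases hj : j = i <;> simp [pointMass, ebN, eb, hj]

/-- The congestion distribution `y = ∑ j, α j * x j` of the joint distribution `x`. -/
def congestion [Fintype ι] (α : ι → ℝ) (x : ι → τ → S → A → ℝ) (t : τ) (s : S) (a : A) : ℝ :=
  ∑ j, α j * x j t s a

/-- The congestion of a state: the total congestion of its actions. -/
def stateCongestion [Fintype ι] [Fintype A] (α : ι → ℝ) (x : ι → τ → S → A → ℝ)
    (t : τ) (s : S) : ℝ :=
  ∑ a, congestion α x t s a

/-- The congestion-form cost `α_i f_{t,s} + α_i g_{t,s,a} + h^i_{t,s,a}` at the index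
`(i, t, s, a)`, where `f` is charged on the state congestion, `g` on the congestion of the
state-action pair, and `h` on the player's own distribution. -/
def congestionCost [Fintype ι] [Fintype A] (α : ι → ℝ) (f : τ → S → ℝ → ℝ)
    (g : τ → S → A → ℝ → ℝ) (h : ι → τ → S → A → ℝ → ℝ) :
    ι × τ × S × A → (ι → τ → S → A → ℝ) → ℝ
  | (i, t, s, a), x =>
    α i * f t s (stateCongestion α x t s) + α i * g t s a (congestion α x t s a)
      + h i t s a (x i t s a)

variable [Fintype ι] [Fintype τ] [Fintype S] [Fintype A]

/-- The candidate potential `F` for the congestion-form costs: the sum of the primitives of all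
`f_{t,s}`, `g_{t,s,a}` and `h^i_{t,s,a}`, each evaluated at the argument it has in the cost. -/
noncomputable def congestionPotential (α : ι → ℝ) (f : τ → S → ℝ → ℝ)
    (g : τ → S → A → ℝ → ℝ) (h : ι → τ → S → A → ℝ → ℝ) (x : ι → τ → S → A → ℝ) : ℝ :=
  (∑ t, ∑ s, ∫ u in (0 : ℝ)..stateCongestion α x t s, f t s u)
    + (∑ t, ∑ s, ∑ a, ∫ u in (0 : ℝ)..congestion α x t s a, g t s a u)
    + ∑ i, ∑ t, ∑ s, ∑ a, ∫ u in (0 : ℝ)..x i t s a, h i t s a u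

variable [DecidableEq ι] [DecidableEq τ] [DecidableEq S] [DecidableEq A]

theorem isPotential_eval (j : ι) (t : τ) (s : S) (a : A) :
    IsPotential pointMass (fun x : ι → τ → S → A → ℝ => x j t s a)
      fun k _ => if (j, t, s, a) = k then 1 else 0 :=
  .of_continuousLinearMap pointMass
    (.proj (R := ℝ) (φ := fun _ : A => ℝ) a ∘L .proj (φ := fun _ : S => A → ℝ) s ∘L
      .proj (φ := fun _ : τ => S → A → ℝ) t ∘L .proj (φ := fun _ : ι => τ → S → A → ℝ) j)

theorem isPotential_congestion (α : ι → ℝ) (t : τ) (s : S) (a : A) :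
    IsPotential pointMass (fun x => congestion α x t s a)
      fun (i, t', s', a') _ => if (t, s, a) = (t', s', a') then α i else 0 := by
  refine (IsPotential.sum fun j (_ : j ∈ univ) =>
    (isPotential_eval j t s a).const_mul (α j)).congr_cost fun ⟨i, t', s', a'⟩ _ => ?_
  simp only [Prod.mk.injEq, ite_and, mul_ite, mul_one, mul_zero, sum_ite_eq', mem_univ, if_true]

theorem isPotential_stateCongestion (α : ι → ℝ) (t : τ) (s : S) :
    IsPotential pointMass (fun x : ι → τ → S → A → ℝ => stateCongestion α x t s)
      fun (i, t', s', _) _ => if (t, s) = (t', s') then α i else 0 := by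
  refine (IsPotential.sum fun a (_ : a ∈ univ) => isPotential_congestion α t s a).congr_cost
    fun ⟨i, t', s', a'⟩ _ => ?_
  simp only [Prod.mk.injEq, ite_and, sum_ite_irrel, sum_const_zero, sum_ite_eq', mem_univ, if_true]

theorem isPotential_sum_integral_stateCongestion (α : ι → ℝ) {f : τ → S → ℝ → ℝ}
    (hf : ∀ t s, Continuous (f t s)) :
    IsPotential pointMass
      (fun x : ι → τ → S → A → ℝ => ∑ t, ∑ s, ∫ u in (0 : ℝ)..stateCongestion α x t s, f t s u)
      fun (i, t, s, _) x => α i * f t s (stateCongestion α x t s) := by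
  refine (IsPotential.sum fun t (_ : t ∈ univ) => .sum fun s (_ : s ∈ univ) =>
    (isPotential_stateCongestion (A := A) α t s).integral_comp (hf t s) 0).congr_cost
    fun ⟨i, t', s', a'⟩ x => ?_
  simp only [Prod.mk.injEq, ite_and, ite_mul, zero_mul, sum_ite_irrel, sum_const_zero,
    sum_ite_eq', mem_univ, if_true]

theorem isPotential_sum_integral_congestion (α : ι → ℝ) {g : τ → S → A → ℝ → ℝ}
    (hg : ∀ t s a, Continuous (g t s a)) :
    IsPotential pointMass
      (fun x => ∑ t, ∑ s, ∑ a, ∫ u in (0 : ℝ)..congestion α x t s a, g t s a u)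
      fun (i, t, s, a) x => α i * g t s a (congestion α x t s a) := by
  refine (IsPotential.sum fun t (_ : t ∈ univ) => .sum fun s (_ : s ∈ univ) =>
    .sum fun a (_ : a ∈ univ) =>
      (isPotential_congestion α t s a).integral_comp (hg t s a) 0).congr_cost
    fun ⟨i, t', s', a'⟩ x => ?_
  simp only [Prod.mk.injEq, ite_and, ite_mul, zero_mul, sum_ite_irrel, sum_const_zero,
    sum_ite_eq', mem_univ, if_true]

theorem isPotential_sum_integral_eval {h : ι → τ → S → A → ℝ → ℝ}
    (hh : ∀ i t s a, Continuous (h i t s a)) :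
    IsPotential pointMass
      (fun x => ∑ i, ∑ t, ∑ s, ∑ a, ∫ u in (0 : ℝ)..x i t s a, h i t s a u)
      fun (i, t, s, a) x => h i t s a (x i t s a) := by
  refine (IsPotential.sum fun i (_ : i ∈ univ) => .sum fun t (_ : t ∈ univ) =>
    .sum fun s (_ : s ∈ univ) => .sum fun a (_ : a ∈ univ) =>
      (isPotential_eval i t s a).integral_comp (hh i t s a) 0).congr_cost
    fun ⟨i, t', s', a'⟩ x => ?_
  simp only [Prod.mk.injEq, ite_and, ite_mul, one_mul, zero_mul, sum_ite_irrel, sum_const_zero,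
    sum_ite_eq', mem_univ, if_true]

theorem stmt17_general (α : ι → ℝ) {f : τ → S → ℝ → ℝ} {g : τ → S → A → ℝ → ℝ}
    {h : ι → τ → S → A → ℝ → ℝ} (hf : ∀ t s, Continuous (f t s))
    (hg : ∀ t s a, Continuous (g t s a)) (hh : ∀ i t s a, Continuous (h i t s a)) :
    IsPotential pointMass (congestionPotential α f g h) (congestionCost α f g h) :=
  ((isPotential_sum_integral_stateCongestion α hf).add
    (isPotential_sum_integral_congestion α hg)).add (isPotential_sum_integral_eval hh)

end Congestion

/-- For congestion-form player costs with continuous f, g, h, the function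
F(x) = ∑_{t,s} ∫₀^{∑_{a'} y(t,s,a')} f_{t,s} + ∑_{t,s,a} ∫₀^{y(t,s,a)} g_{t,s,a}
+ ∑_{i,t,s,a} ∫₀^{xⁱ(t,s,a)} hⁱ_{t,s,a} is differentiable and is a potential function:
∂F/∂xⁱ(t,s,a)(x) = ℓⁱ(t,s,a)(x) for all x and all (i,t,s,a). -/
theorem stmt17 {S A : Type*} [Fintype S] [Fintype A] [Nonempty S] [Nonempty A]
    [DecidableEq S] [DecidableEq A] {T N : ℕ}
    (α : Fin N → ℝ) (hα : ∀ j, 0 < α j)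
    (f : Fin (T+1) → S → ℝ → ℝ) (g : Fin (T+1) → S → A → ℝ → ℝ)
    (h : Fin N → Fin (T+1) → S → A → ℝ → ℝ)
    (hf : ∀ t s, Continuous (f t s)) (hg : ∀ t s a, Continuous (g t s a))
    (hh : ∀ i t s a, Continuous (h i t s a))
    (ℓ : Fin N → Fin (T+1) → S → A → (Fin N → Fin (T+1) → S → A → ℝ) → ℝ)
    (hℓ : ∀ i t s a x, ℓ i t s a x =
      α i * f t s (∑ a', ∑ j, α j * x j t s a')
        + α i * g t s a (∑ j, α j * x j t s a)
        + h i t s a (x i t s a))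
    (F : (Fin N → Fin (T+1) → S → A → ℝ) → ℝ)
    (hF : ∀ x, F x =
      (∑ t, ∑ s, ∫ u in (0:ℝ)..(∑ a', ∑ j, α j * x j t s a'), f t s u)
        + (∑ t, ∑ s, ∑ a, ∫ u in (0:ℝ)..(∑ j, α j * x j t s a), g t s a u)
        + ∑ i, ∑ t, ∑ s, ∑ a, ∫ u in (0:ℝ)..(x i t s a), h i t s a u) :
    ∀ x : Fin N → Fin (T+1) → S → A → ℝ,
      DifferentiableAt ℝ F x ∧
      ∀ i t s a, fderiv ℝ F x (ebN N T i t s a) = ℓ i t s a x := by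
  obtain rfl : F = congestionPotential α f g h := funext hF
  exact fun x => (stmt17_general α hf hg hh x).imp_right fun hx i t s a => by
    rw [← pointMass_eq_ebN, hx, hℓ]; rfl
end
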